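/- Assume strict feasibility of the primal problem. Define Z(ε) = { z ∈ ℝ₊^{4N} : V(z) ≤ ε } and F(ε) = inf{ D(z) : z ∈ Z(ε) }. Then there exists κ > 0 such that for every ε with 0 < ε ≤ κ, the set Z(ε) is bounded and F(ε) > −∞. -/

import Mathlib

open Matrix

noncomputable section

/-- Euclidean norm of a vector in ℝ^{4N}, represented as four blocks of ℝ^N. -/
def enorm4 {N : ℕ} (w : Fin 4 → Fin N → ℝ) : ℝ :=
  Real.sqrt (∑ b, ∑ i, w b i ^ 2)

/-- sign(x) = 1 if x ≥ 0 and −1 if x < 0. -/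
def sgn (x : ℝ) : ℝ := if 0 ≤ x then 1 else -1

/-- The (linearized) voltage map v(q) = A q + d. -/
def volt {N : ℕ} (A : Matrix (Fin N) (Fin N) ℝ) (d : Fin N → ℝ) (q : Fin N → ℝ) :
    Fin N → ℝ :=
  A *ᵥ q + d

/-- q(z) = λ^min − λ^max + A⁻¹(μ^min − μ^max). -/
def qOf {N : ℕ} (A : Matrix (Fin N) (Fin N) ℝ) (z : Fin 4 → Fin N → ℝ) : Fin N → ℝ :=
  z 0 - z 1 + A⁻¹ *ᵥ (z 2 - z 3)

/-- ∇D(z) = (v^min − v(q(z)), v(q(z)) − v^max, q^min − q(z), q(z) − q^max). -/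
def gradD {N : ℕ} (A : Matrix (Fin N) (Fin N) ℝ) (d vmin vmax qmin qmax : Fin N → ℝ)
    (z : Fin 4 → Fin N → ℝ) : Fin 4 → Fin N → ℝ :=
  ![vmin - volt A d (qOf A z), volt A d (qOf A z) - vmax,
    qmin - qOf A z, qOf A z - qmax]

/-- V(z) = ‖z − ⌈z + ∇D(z)⌉₊‖. -/
def Vfun {N : ℕ} (A : Matrix (Fin N) (Fin N) ℝ) (d vmin vmax qmin qmax : Fin N → ℝ)
    (z : Fin 4 → Fin N → ℝ) : ℝ :=
  enorm4 (fun b i => z b i - max (z b i + gradD A d vmin vmax qmin qmax z b i) 0)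

/-- The Lagrangian dual function
D(z) = inf_q [ (1/2) qᵀAq + (λ^min)ᵀ(v^min − v(q)) + (λ^max)ᵀ(v(q) − v^max)
  + (μ^min)ᵀ(q^min − q) + (μ^max)ᵀ(q − q^max) ]. -/
def dualFun {N : ℕ} (A : Matrix (Fin N) (Fin N) ℝ) (d vmin vmax qmin qmax : Fin N → ℝ)
    (z : Fin 4 → Fin N → ℝ) : ℝ :=
  ⨅ q : Fin N → ℝ,
    ((1 / 2) * (q ⬝ᵥ A *ᵥ q) + (z 0) ⬝ᵥ (vmin - volt A d q)
      + (z 1) ⬝ᵥ (volt A d q - vmax) + (z 2) ⬝ᵥ (qmin - q) + (z 3) ⬝ᵥ (q - qmax))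

/-- fes(q) = Euclidean distance from (q, v(q)) to the box [q^min,q^max] × [v^min,v^max]. -/
def fes {N : ℕ} (A : Matrix (Fin N) (Fin N) ℝ) (d vmin vmax qmin qmax : Fin N → ℝ)
    (q : Fin N → ℝ) : ℝ :=
  sInf { r : ℝ | ∃ y1 y2 : Fin N → ℝ,
    (∀ i, qmin i ≤ y1 i ∧ y1 i ≤ qmax i) ∧ (∀ i, vmin i ≤ y2 i ∧ y2 i ≤ vmax i) ∧
    r = Real.sqrt ((∑ i, (q i - y1 i) ^ 2) + ∑ i, (volt A d q i - y2 i) ^ 2) }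

/-!
Let `q₀` satisfy every constraint with slack at least `δ > 0`. For `z ∈ Z(ε)` the point `q(z)`
minimises the Lagrangian `L(z, ·)`, so `D(z) = L(z, q(z)) ≤ L(z, q₀) ≤ ½ q₀ᵀAq₀ - δ ∑ z`.
Conversely, a residual at most `ε` says that every constraint value `c` at `q(z)` satisfies
`c ≤ ε`, and that `c ≥ -ε` unless its multiplier is at most `ε`. Constraints come in pairs
bounding the same quantity on both sides, so `c ≤ ε` for one of them bounds the other from below
by `-(w + ε)`, where `w` is the width of the box. Together these give
`L(z, q(z)) ≥ -ε (M + ∑ z)` with `M` depending only on `ε` and the bounds. Comparing the two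
estimates yields `(δ - ε) ∑ z ≤ ½ q₀ᵀAq₀ + ε M`, which bounds `Z(ε)` for `ε < δ`, and then
the lower bound on `L(z, q(z))` bounds `D` from below on `Z(ε)`.
-/

section Residual

variable {R : Type*} [AddCommGroup R] [LinearOrder R] [IsOrderedAddMonoid R]

lemma le_of_abs_sub_max_add_le {x g ε : R} (h : |x - max (x + g) 0| ≤ ε) : g ≤ ε :=
  (le_sub_iff_add_le'.2 (le_max_left (x + g) 0)).trans (abs_sub_le_iff.1 h).2

lemma le_or_neg_le_of_abs_sub_max_add_le {x g ε : R} (h : |x - max (x + g) 0| ≤ ε) :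
    x ≤ ε ∨ -ε ≤ g := by
  have hle : x - max (x + g) 0 ≤ ε := (abs_sub_le_iff.1 h).1
  rcases le_total (x + g) 0 with hneg | hpos
  · exact Or.inl (by simpa only [max_eq_right hneg, sub_zero] using hle)
  · exact Or.inr (neg_le.1 (by simpa only [max_eq_left hpos, sub_add_cancel_left] using hle))

end Residual

section Complementarity

variable {R ι : Type*} [CommRing R] [LinearOrder R] [IsStrictOrderedRing R]

lemma neg_mul_add_le_mul_of_abs_sub_max_add_le {x g ε m : R} (hx : 0 ≤ x) (hm : 0 ≤ m)
    (hg : -m ≤ g) (h : |x - max (x + g) 0| ≤ ε) : -(ε * (m + x)) ≤ x * g := by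
  have hε : 0 ≤ ε := (abs_nonneg _).trans h
  rcases le_or_neg_le_of_abs_sub_max_add_le h with hxε | hgε
  · calc -(ε * (m + x)) ≤ -(x * m) := by
          linarith [mul_le_mul_of_nonneg_right hxε hm, mul_nonneg hε hx]
      _ ≤ x * g := by linarith [mul_le_mul_of_nonneg_left hg hx]
  · calc -(ε * (m + x)) ≤ -(ε * x) := by linarith [mul_nonneg hε hm]
      _ ≤ x * g := by linarith [mul_le_mul_of_nonneg_left hgε hx]

variable [Fintype ι] {z g m : ι → R} {ε : R}

lemma neg_mul_sum_add_sum_le_dotProduct (hz : ∀ i, 0 ≤ z i) (hm : ∀ i, 0 ≤ m i)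
    (hg : ∀ i, -m i ≤ g i) (h : ∀ i, |z i - max (z i + g i) 0| ≤ ε) :
    -(ε * (∑ i, m i + ∑ i, z i)) ≤ z ⬝ᵥ g := by
  rw [← Finset.sum_add_distrib, Finset.mul_sum, ← Finset.sum_neg_distrib]
  exact Finset.sum_le_sum fun i _ =>
    neg_mul_add_le_mul_of_abs_sub_max_add_le (hz i) (hm i) (hg i) (h i)

lemma dotProduct_le_neg_mul_sum {s : ι → R} {δ : R} (hz : ∀ i, 0 ≤ z i) (hs : ∀ i, s i ≤ -δ) :
    z ⬝ᵥ s ≤ -(δ * ∑ i, z i) :=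
  calc z ⬝ᵥ s ≤ ∑ i, z i * -δ :=
        Finset.sum_le_sum fun i _ => mul_le_mul_of_nonneg_left (hs i) (hz i)
    _ = -(δ * ∑ i, z i) := by rw [← Finset.sum_mul, mul_neg, mul_comm]

end Complementarity

lemma isBounded_of_nonneg_of_sum_le {ι κ : Type*} [Fintype ι] [Fintype κ] {S : Set (ι → κ → ℝ)}
    {r : ℝ} (hS : ∀ z ∈ S, ∀ b i, 0 ≤ z b i) (hr : ∀ z ∈ S, ∑ p, Function.uncurry z p ≤ r) :
    Bornology.IsBounded S := by
  refine (Metric.isBounded_Icc (0 : ι → κ → ℝ) fun _ _ => r).subset fun z hz => ⟨hS z hz, ?_⟩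
  exact fun b i => (Finset.single_le_sum (f := Function.uncurry z) (fun p _ => hS z hz p.1 p.2)
    (Finset.mem_univ (b, i))).trans (hr z hz)

lemma abs_le_enorm4 {N : ℕ} (w : Fin 4 → Fin N → ℝ) (b : Fin 4) (i : Fin N) :
    |w b i| ≤ enorm4 w := by
  rw [enorm4, ← Fintype.sum_prod_type']
  exact Real.abs_le_sqrt (Finset.single_le_sum (f := fun p : Fin 4 × Fin N => w p.1 p.2 ^ 2)
    (fun _ _ => sq_nonneg _) (Finset.mem_univ (b, i)))

lemma dotProduct_mulVec_comm_of_isSymm {R n : Type*} [CommSemiring R] [Fintype n]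
    {A : Matrix n n R} (hA : A.IsSymm) (x y : n → R) : x ⬝ᵥ A *ᵥ y = y ⬝ᵥ A *ᵥ x := by
  rw [dotProduct_mulVec, ← mulVec_transpose, hA.eq, dotProduct_comm]

section DualProblem

variable {N : ℕ}

/-- The constraint functions `c(q) = (v^min − v(q), v(q) − v^max, q^min − q, q − q^max)`, in the
block order of the dual variables; `q` is feasible iff all entries are `≤ 0`. -/
def constraintValue (A : Matrix (Fin N) (Fin N) ℝ) (d vmin vmax qmin qmax q : Fin N → ℝ) :
    Fin 4 → Fin N → ℝ :=
  ![vmin - volt A d q, volt A d q - vmax, qmin - q, q - qmax]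

/-- The width of the interval constrained by each entry of `constraintValue`. -/
def constraintWidth (vmin vmax qmin qmax : Fin N → ℝ) : Fin 4 → Fin N → ℝ :=
  ![vmax - vmin, vmax - vmin, qmax - qmin, qmax - qmin]

/-- The Lagrangian `½ qᵀAq + zᵀc(q)` of the primal problem. -/
def lagrangian (A : Matrix (Fin N) (Fin N) ℝ) (d vmin vmax qmin qmax : Fin N → ℝ)
    (z : Fin 4 → Fin N → ℝ) (q : Fin N → ℝ) : ℝ :=
  1 / 2 * (q ⬝ᵥ A *ᵥ q) +
    Function.uncurry z ⬝ᵥ Function.uncurry (constraintValue A d vmin vmax qmin qmax q)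

/-- The set `Z(ε)` of nonnegative dual variables whose projection residual `V` is at most `ε`. -/
def residualSublevel (A : Matrix (Fin N) (Fin N) ℝ) (d vmin vmax qmin qmax : Fin N → ℝ) (ε : ℝ) :
    Set (Fin 4 → Fin N → ℝ) :=
  {z | (∀ b i, 0 ≤ z b i) ∧ Vfun A d vmin vmax qmin qmax z ≤ ε}

variable {A : Matrix (Fin N) (Fin N) ℝ} {d vmin vmax qmin qmax : Fin N → ℝ}

section Lagrangian

lemma uncurry_dotProduct_constraintValue (z : Fin 4 → Fin N → ℝ) (q : Fin N → ℝ) :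
    Function.uncurry z ⬝ᵥ Function.uncurry (constraintValue A d vmin vmax qmin qmax q) =
      z 0 ⬝ᵥ (vmin - volt A d q) + z 1 ⬝ᵥ (volt A d q - vmax) + z 2 ⬝ᵥ (qmin - q) +
        z 3 ⬝ᵥ (q - qmax) := by
  rw [dotProduct, Fintype.sum_prod_type, Fin.sum_univ_four]
  rfl

lemma dualFun_eq_iInf_lagrangian (z : Fin 4 → Fin N → ℝ) :
    dualFun A d vmin vmax qmin qmax z = ⨅ q, lagrangian A d vmin vmax qmin qmax z q := by
  simp only [dualFun, lagrangian, uncurry_dotProduct_constraintValue, add_assoc]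

lemma mulVec_qOf (hdet : IsUnit A.det) (z : Fin 4 → Fin N → ℝ) :
    A *ᵥ qOf A z = A *ᵥ (z 0 - z 1) + (z 2 - z 3) := by
  rw [qOf, mulVec_add, mulVec_mulVec, mul_nonsing_inv A hdet, one_mulVec]

lemma uncurry_dotProduct_constraintValue_eq_sub (hA : A.IsSymm) (hdet : IsUnit A.det)
    (z : Fin 4 → Fin N → ℝ) (p q : Fin N → ℝ) :
    Function.uncurry z ⬝ᵥ Function.uncurry (constraintValue A d vmin vmax qmin qmax q) =
      Function.uncurry z ⬝ᵥ Function.uncurry (constraintValue A d vmin vmax qmin qmax p) -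
        (q - p) ⬝ᵥ A *ᵥ qOf A z := by
  have hlin : (q - p) ⬝ᵥ A *ᵥ qOf A z =
      z 0 ⬝ᵥ A *ᵥ (q - p) - z 1 ⬝ᵥ A *ᵥ (q - p) + (z 2 ⬝ᵥ (q - p) - z 3 ⬝ᵥ (q - p)) := by
    rw [mulVec_qOf hdet, dotProduct_add, dotProduct_mulVec_comm_of_isSymm hA,
      dotProduct_comm _ (z 2 - z 3), sub_dotProduct, sub_dotProduct]
  rw [hlin, uncurry_dotProduct_constraintValue, uncurry_dotProduct_constraintValue]
  simp only [volt, dotProduct_sub, dotProduct_add, mulVec_sub]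
  ring

lemma lagrangian_eq_lagrangian_qOf_add (hA : A.IsSymm) (hdet : IsUnit A.det)
    (z : Fin 4 → Fin N → ℝ) (q : Fin N → ℝ) :
    lagrangian A d vmin vmax qmin qmax z q =
      lagrangian A d vmin vmax qmin qmax z (qOf A z) +
        1 / 2 * ((q - qOf A z) ⬝ᵥ A *ᵥ (q - qOf A z)) := by
  rw [lagrangian, lagrangian, uncurry_dotProduct_constraintValue_eq_sub hA hdet z (qOf A z) q]
  simp only [mulVec_sub, dotProduct_sub, sub_dotProduct,
    dotProduct_mulVec_comm_of_isSymm hA (qOf A z) q]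
  ring

lemma lagrangian_qOf_le (hA : A.PosDef) (z : Fin 4 → Fin N → ℝ) (q : Fin N → ℝ) :
    lagrangian A d vmin vmax qmin qmax z (qOf A z) ≤ lagrangian A d vmin vmax qmin qmax z q := by
  have hsymm : A.IsSymm := isHermitian_iff_isSymm.1 hA.isHermitian
  have hsq : 0 ≤ (q - qOf A z) ⬝ᵥ A *ᵥ (q - qOf A z) := by
    simpa using hA.posSemidef.dotProduct_mulVec_nonneg (q - qOf A z)
  rw [lagrangian_eq_lagrangian_qOf_add hsymm hA.det_pos.ne'.isUnit z q]
  linarith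

lemma dotProduct_constraintValue_le_lagrangian (hA : A.PosSemidef) (z : Fin 4 → Fin N → ℝ)
    (q : Fin N → ℝ) :
    Function.uncurry z ⬝ᵥ Function.uncurry (constraintValue A d vmin vmax qmin qmax q) ≤
      lagrangian A d vmin vmax qmin qmax z q := by
  have hquad : 0 ≤ q ⬝ᵥ A *ᵥ q := by simpa using hA.dotProduct_mulVec_nonneg q
  exact le_add_of_nonneg_left (by positivity)

lemma lagrangian_le_sub_mul_sum {z : Fin 4 → Fin N → ℝ} {q : Fin N → ℝ} {δ : ℝ}
    (hz : ∀ b i, 0 ≤ z b i) (hq : ∀ b i, constraintValue A d vmin vmax qmin qmax q b i ≤ -δ) :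
    lagrangian A d vmin vmax qmin qmax z q ≤
      1 / 2 * (q ⬝ᵥ A *ᵥ q) - δ * ∑ p, Function.uncurry z p := by
  rw [lagrangian, sub_eq_add_neg]
  gcongr
  exact dotProduct_le_neg_mul_sum (fun p => hz p.1 p.2) fun p => hq p.1 p.2

end Lagrangian

section Constraints

lemma constraintWidth_nonneg (hv : ∀ i, vmin i ≤ vmax i) (hq : ∀ i, qmin i ≤ qmax i) (b : Fin 4)
    (i : Fin N) : 0 ≤ constraintWidth vmin vmax qmin qmax b i := by
  fin_cases b <;> simp [constraintWidth, hv i, hq i]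

lemma neg_constraintWidth_add_le_constraintValue {q : Fin N → ℝ} {ε : ℝ}
    (h : ∀ b i, constraintValue A d vmin vmax qmin qmax q b i ≤ ε) (b : Fin 4) (i : Fin N) :
    -(constraintWidth vmin vmax qmin qmax b i + ε) ≤
      constraintValue A d vmin vmax qmin qmax q b i := by
  have hvmin : vmin i - volt A d q i ≤ ε := h 0 i
  have hvmax : volt A d q i - vmax i ≤ ε := h 1 i
  have hqmin : qmin i - q i ≤ ε := h 2 i
  have hqmax : q i - qmax i ≤ ε := h 3 i
  fin_cases b
  · change -(vmax i - vmin i + ε) ≤ vmin i - volt A d q i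
    linarith
  · change -(vmax i - vmin i + ε) ≤ volt A d q i - vmax i
    linarith
  · change -(qmax i - qmin i + ε) ≤ qmin i - q i
    linarith
  · change -(qmax i - qmin i + ε) ≤ q i - qmax i
    linarith

lemma exists_pos_forall_constraintValue_le_neg {q : Fin N → ℝ}
    (hq : ∀ i, qmin i < q i ∧ q i < qmax i)
    (hv : ∀ i, vmin i < volt A d q i ∧ volt A d q i < vmax i) :
    ∃ δ > 0, ∀ b i, constraintValue A d vmin vmax qmin qmax q b i ≤ -δ := by
  have hneg : ∀ p : Fin 4 × Fin N, constraintValue A d vmin vmax qmin qmax q p.1 p.2 < 0 := by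
    rintro ⟨b, i⟩
    fin_cases b <;> simp [constraintValue, hq i, hv i]
  obtain ⟨δ, hδ, hlt⟩ := Pi.exists_forall_pos_add_lt hneg
  exact ⟨δ, hδ, fun b i => le_neg_iff_add_nonpos_right.2 (hlt (b, i)).le⟩

end Constraints

section ResidualSublevel

variable {z : Fin 4 → Fin N → ℝ} {q : Fin N → ℝ} {δ ε : ℝ}

lemma abs_sub_max_le_of_mem_residualSublevel
    (hz : z ∈ residualSublevel A d vmin vmax qmin qmax ε) (b : Fin 4) (i : Fin N) :
    |z b i - max (z b i + constraintValue A d vmin vmax qmin qmax (qOf A z) b i) 0| ≤ ε :=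
  (abs_le_enorm4 _ b i).trans hz.2

lemma neg_mul_add_sum_le_lagrangian_qOf (hA : A.PosSemidef) (hv : ∀ i, vmin i ≤ vmax i)
    (hq : ∀ i, qmin i ≤ qmax i) (hz : z ∈ residualSublevel A d vmin vmax qmin qmax ε) :
    -(ε * (∑ p : Fin 4 × Fin N, (constraintWidth vmin vmax qmin qmax p.1 p.2 + ε) +
        ∑ p, Function.uncurry z p)) ≤
      lagrangian A d vmin vmax qmin qmax z (qOf A z) := by
  have hres := abs_sub_max_le_of_mem_residualSublevel hz
  refine le_trans (neg_mul_sum_add_sum_le_dotProduct (fun p => hz.1 p.1 p.2) (fun p => ?_)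
    (fun p => ?_) fun p => hres p.1 p.2) (dotProduct_constraintValue_le_lagrangian hA z _)
  · exact add_nonneg (constraintWidth_nonneg hv hq p.1 p.2) ((abs_nonneg _).trans (hres p.1 p.2))
  · exact neg_constraintWidth_add_le_constraintValue
      (fun b i => le_of_abs_sub_max_add_le (hres b i)) p.1 p.2

lemma exists_forall_mem_residualSublevel_sum_le (hA : A.PosDef) (hv : ∀ i, vmin i ≤ vmax i)
    (hq : ∀ i, qmin i ≤ qmax i) (hεδ : ε < δ)
    (hslack : ∀ b i, constraintValue A d vmin vmax qmin qmax q b i ≤ -δ) :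
    ∃ r, ∀ z ∈ residualSublevel A d vmin vmax qmin qmax ε, ∑ p, Function.uncurry z p ≤ r := by
  let m := ∑ p : Fin 4 × Fin N, (constraintWidth vmin vmax qmin qmax p.1 p.2 + ε)
  refine ⟨(1 / 2 * (q ⬝ᵥ A *ᵥ q) + ε * m) / (δ - ε), fun z hz => ?_⟩
  have hsandwich : -(ε * (m + ∑ p, Function.uncurry z p)) ≤
      1 / 2 * (q ⬝ᵥ A *ᵥ q) - δ * ∑ p, Function.uncurry z p :=
    calc _ ≤ lagrangian A d vmin vmax qmin qmax z (qOf A z) :=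
          neg_mul_add_sum_le_lagrangian_qOf hA.posSemidef hv hq hz
      _ ≤ lagrangian A d vmin vmax qmin qmax z q := lagrangian_qOf_le hA z q
      _ ≤ _ := lagrangian_le_sub_mul_sum hz.1 hslack
  rw [le_div_iff₀ (sub_pos.2 hεδ)]
  linarith

lemma isBounded_residualSublevel (hA : A.PosDef) (hv : ∀ i, vmin i ≤ vmax i)
    (hq : ∀ i, qmin i ≤ qmax i) (hεδ : ε < δ)
    (hslack : ∀ b i, constraintValue A d vmin vmax qmin qmax q b i ≤ -δ) :
    Bornology.IsBounded (residualSublevel A d vmin vmax qmin qmax ε) := by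
  obtain ⟨r, hr⟩ := exists_forall_mem_residualSublevel_sum_le hA hv hq hεδ hslack
  exact isBounded_of_nonneg_of_sum_le (fun z hz => hz.1) hr

lemma bddBelow_dualFun_image_residualSublevel (hA : A.PosDef) (hv : ∀ i, vmin i ≤ vmax i)
    (hq : ∀ i, qmin i ≤ qmax i) (hεδ : ε < δ)
    (hslack : ∀ b i, constraintValue A d vmin vmax qmin qmax q b i ≤ -δ) :
    BddBelow (dualFun A d vmin vmax qmin qmax '' residualSublevel A d vmin vmax qmin qmax ε) := by
  obtain ⟨r, hr⟩ := exists_forall_mem_residualSublevel_sum_le hA hv hq hεδ hslack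
  refine ⟨-(ε * (∑ p : Fin 4 × Fin N, (constraintWidth vmin vmax qmin qmax p.1 p.2 + ε) + r)), ?_⟩
  rintro _ ⟨z, hz, rfl⟩
  have hε : 0 ≤ ε := (Real.sqrt_nonneg _).trans hz.2
  calc _ ≤ -(ε * (∑ p : Fin 4 × Fin N, (constraintWidth vmin vmax qmin qmax p.1 p.2 + ε) +
          ∑ p, Function.uncurry z p)) := by grw [hr z hz]
    _ ≤ lagrangian A d vmin vmax qmin qmax z (qOf A z) :=
        neg_mul_add_sum_le_lagrangian_qOf hA.posSemidef hv hq hz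
    _ ≤ ⨅ q, lagrangian A d vmin vmax qmin qmax z q := le_ciInf (lagrangian_qOf_le hA z)
    _ = dualFun A d vmin vmax qmin qmax z := (dualFun_eq_iInf_lagrangian z).symm

end ResidualSublevel

end DualProblem

/-- Proposition 4(a): under strict feasibility there is κ > 0 such that for all
0 < ε ≤ κ the set Z(ε) = {z ∈ ℝ₊^{4N} : V(z) ≤ ε} is bounded and
F(ε) = inf{D(z) : z ∈ Z(ε)} > −∞ (i.e. {D(z) : z ∈ Z(ε)} is bounded below). -/
theorem stmt_13 (N : ℕ) (hN : 0 < N) (A : Matrix (Fin N) (Fin N) ℝ) (hA : A.PosDef)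
    (d vmin vmax qmin qmax : Fin N → ℝ)
    (hv : ∀ i, vmin i ≤ vmax i) (hq : ∀ i, qmin i ≤ qmax i)
    (hstrict : ∃ q : Fin N → ℝ, (∀ i, qmin i < q i ∧ q i < qmax i) ∧
      ∀ i, vmin i < volt A d q i ∧ volt A d q i < vmax i) :
    ∃ κ : ℝ, 0 < κ ∧ ∀ ε : ℝ, 0 < ε → ε ≤ κ →
      Bornology.IsBounded
        {z : Fin 4 → Fin N → ℝ | (∀ b i, 0 ≤ z b i) ∧
          Vfun A d vmin vmax qmin qmax z ≤ ε} ∧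
      BddBelow (dualFun A d vmin vmax qmin qmax ''
        {z : Fin 4 → Fin N → ℝ | (∀ b i, 0 ≤ z b i) ∧
          Vfun A d vmin vmax qmin qmax z ≤ ε}) := by
  obtain ⟨q, hqbox, hvbox⟩ := hstrict
  obtain ⟨δ, hδ, hslack⟩ := exists_pos_forall_constraintValue_le_neg hqbox hvbox
  refine ⟨δ / 2, half_pos hδ, fun ε _ hεκ => ?_⟩
  have hεδ : ε < δ := hεκ.trans_lt (half_lt_self hδ)
  exact ⟨isBounded_residualSublevel hA hv hq hεδ hslack,
    bddBelow_dualFun_image_residualSublevel hA hv hq hεδ hslack⟩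

end
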